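/- Let m ∈ ℝ, t ∈ [0,1], ℏ ∈ (0,1] and a ∈ S^m_f(ℝ^{2n}), let K, L ⊂ ℝⁿ be compact and let N ∈ ℕ. Then there exist C > 0 and N' ∈ ℕ such that | ∫_{ℝⁿ} a(tq + (1-t)q', p) e^{-i p·q'/ℏ} u(q') dq' | ≤ C ⟨p⟩^{-N} Σ_{|β| ≤ N'} sup_{ℝⁿ} |∂_q^β u| for all q ∈ K, all p ∈ ℝⁿ and all u ∈ C_c^∞(ℝⁿ) with supp u ⊂ L. -/

import Mathlib

open MeasureTheory Finset

noncomputable section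

/-- Points of `ℝⁿ` (with `n = d + 1`) split as `q = (r, θ) ∈ ℝ × ℝ^d`. -/
abbrev Q (d : ℕ) : Type := ℝ × (Fin d → ℝ)

/-- The coordinate direction `∂_r`. -/
def eR (d : ℕ) : Q d := ((1 : ℝ), 0)

/-- The coordinate direction `∂_{θ_i}`. -/
def eTh (d : ℕ) (i : Fin d) : Q d := ((0 : ℝ), Pi.single i 1)

/-- Directional derivative of a complex-valued function. -/
def dirD {E : Type*} [NormedAddCommGroup E] [NormedSpace ℝ E]
    (v : E) (g : E → ℂ) : E → ℂ :=
  fun x => fderiv ℝ g x v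

/-- Multiindices `α = (α₀, α')` split as in the paper. -/
abbrev MIdx (d : ℕ) : Type := ℕ × (Fin d → ℕ)

/-- `|α| = α₀ + |α'|`. -/
def deg {d : ℕ} (α : MIdx d) : ℕ := α.1 + ∑ i, α.2 i

/-- `|α'|`, the angular part of a multiindex. -/
def degA {d : ℕ} (α : MIdx d) : ℕ := ∑ i, α.2 i

/-- `∂_q^α` acting on functions on `ℝⁿ = ℝ × ℝ^d`. -/
def mderiv1 {d : ℕ} (α : MIdx d) (g : Q d → ℂ) : Q d → ℂ :=
  (dirD (eR d))^[α.1] <|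
    (List.finRange d).foldr (fun i h => (dirD (eTh d i))^[α.2 i] h) g

/-- `∂_q^α ∂_p^β` acting on functions on phase space. -/
def mderiv2 {d : ℕ} (α β : MIdx d) (g : Q d × Q d → ℂ) : Q d × Q d → ℂ :=
  (dirD ((eR d, 0) : Q d × Q d))^[α.1] <|
  (List.finRange d).foldr (fun i h => (dirD ((eTh d i, 0) : Q d × Q d))^[α.2 i] h) <|
  (dirD (((0 : Q d), eR d) : Q d × Q d))^[β.1] <|
  (List.finRange d).foldr (fun i h => (dirD (((0 : Q d), eTh d i) : Q d × Q d))^[β.2 i] h) g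

/-- `∂_q^α ∂_p^β ∂_{q'}^γ` acting on amplitudes `a(q, p, q')`. -/
def mderiv3 {d : ℕ} (α β γ : MIdx d) (g : Q d × Q d × Q d → ℂ) : Q d × Q d × Q d → ℂ :=
  (dirD ((eR d, 0, 0) : Q d × Q d × Q d))^[α.1] <|
  (List.finRange d).foldr (fun i h => (dirD ((eTh d i, 0, 0) : Q d × Q d × Q d))^[α.2 i] h) <|
  (dirD (((0 : Q d), eR d, 0) : Q d × Q d × Q d))^[β.1] <|
  (List.finRange d).foldr (fun i h => (dirD (((0 : Q d), eTh d i, 0) : Q d × Q d × Q d))^[β.2 i] h) <|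
  (dirD (((0 : Q d), (0 : Q d), eR d) : Q d × Q d × Q d))^[γ.1] <|
  (List.finRange d).foldr (fun i h => (dirD (((0 : Q d), (0 : Q d), eTh d i) : Q d × Q d × Q d))^[γ.2 i] h) g

/-- `⟨p⟩ = (1 + ρ² + |η|²)^{1/2}`. -/
def brP {d : ℕ} (p : Q d) : ℝ := Real.sqrt (1 + p.1 ^ 2 + ∑ i, (p.2 i) ^ 2)

/-- `⟨ρ ⊕ f(r)⁻¹ η⟩` evaluated at a phase-space point. -/
def brF {d : ℕ} (f : ℝ → ℝ) (x : Q d × Q d) : ℝ :=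
  Real.sqrt (1 + x.2.1 ^ 2 + ∑ i, (x.2.2 i / f x.1.1) ^ 2)

/-- The standing assumption on `f : ℝ → [1, ∞)`: smooth, `f ≥ 1`, and all derivatives
of `log f` of order `≥ 1` are bounded. -/
def GoodF (f : ℝ → ℝ) : Prop :=
  ContDiff ℝ (⊤ : ℕ∞) f ∧ (∀ r, 1 ≤ f r) ∧
    ∀ j : ℕ, 1 ≤ j → ∃ C : ℝ, ∀ r, |iteratedDeriv j (fun s => Real.log (f s)) r| ≤ C

/-- Membership in the symbol class `S^m_f(ℝ^{2n})`. -/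
def IsSymbol {d : ℕ} (f : ℝ → ℝ) (m : ℝ) (a : Q d × Q d → ℂ) : Prop :=
  ContDiff ℝ (⊤ : ℕ∞) a ∧
    ∀ α β : MIdx d, ∃ C : ℝ, ∀ x : Q d × Q d,
      ‖mderiv2 α β a x‖ ≤ C * f x.1.1 ^ ((degA α : ℝ) - (degA β : ℝ)) * brF f x ^ (m - (deg β : ℝ))

/-- The finite set of multiindices of length `≤ N`. -/
def idxSet (d N : ℕ) : Finset (MIdx d) :=
  ((Finset.range (N + 1)) ×ˢ Fintype.piFinset fun _ : Fin d => Finset.range (N + 1)).filter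
    fun α => deg α ≤ N

/-- The seminorm `|a|_{S^m_f, N}`. -/
def symNorm {d : ℕ} (f : ℝ → ℝ) (m : ℝ) (N : ℕ) (a : Q d × Q d → ℂ) : ℝ :=
  ∑ α ∈ idxSet d N, ∑ β ∈ idxSet d N,
    if deg α + deg β ≤ N then
      ⨆ x : Q d × Q d,
        f x.1.1 ^ (-(degA α : ℝ) + (degA β : ℝ)) * brF f x ^ (-m + (deg β : ℝ)) *
          ‖mderiv2 α β a x‖
    else 0

/-- `p · q`. -/
def qdot {d : ℕ} (p q : Q d) : ℝ := p.1 * q.1 + ∑ i, p.2 i * q.2 i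

/-- The oscillating factor `e^{i p · v / ℏ}`. -/
def ephase {d : ℕ} (ℏ : ℝ) (p v : Q d) : ℂ :=
  Complex.exp (Complex.I * Complex.ofReal (qdot p v) / Complex.ofReal ℏ)

/-- The quantization `Op^t_ℏ(a)` of a symbol, acting on functions (trivialized half-densities). -/
def Op {d : ℕ} (ℏ t : ℝ) (a : Q d × Q d → ℂ) (u : Q d → ℂ) : Q d → ℂ :=
  fun q => ((2 * Real.pi * ℏ) ^ (d + 1) : ℝ)⁻¹ •
    ∫ p : Q d, ∫ q' : Q d,
      a (t • q + (1 - t) • q', p) * ephase ℏ p (q - q') * u q'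

/-- Membership in `C_c^∞(ℝⁿ)`. -/
def IsCc {d : ℕ} (u : Q d → ℂ) : Prop := ContDiff ℝ (⊤ : ℕ∞) u ∧ HasCompactSupport u

/-- The `L²` inner product `⟨w, v⟩ = ∫ w \bar v`. -/
def l2inner {d : ℕ} (w v : Q d → ℂ) : ℂ := ∫ q : Q d, w q * (starRingEnd ℂ) (v q)

/-- The `L²` norm. -/
def l2norm {d : ℕ} (u : Q d → ℂ) : ℝ := (∫ q : Q d, ‖u q‖ ^ 2) ^ (1 / 2 : ℝ)

/-- `Σ_{|β| ≤ N} sup |∂^β u|`. -/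
def ckNorm {d : ℕ} (N : ℕ) (u : Q d → ℂ) : ℝ :=
  ∑ β ∈ idxSet d N, ⨆ q : Q d, ‖mderiv1 β u q‖

/-- `⟨ρ ⊕ f(tr + (1-t)r')⁻¹ η⟩` evaluated at a point `(q, p, q')`. -/
def brFA {d : ℕ} (f : ℝ → ℝ) (t : ℝ) (x : Q d × Q d × Q d) : ℝ :=
  Real.sqrt (1 + x.2.1.1 ^ 2 + ∑ i, (x.2.1.2 i / f (t * x.1.1 + (1 - t) * x.2.2.1)) ^ 2)

/-- Membership in the amplitude class `BS^m_{f,t}(ℝ^{3n})`. -/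
def IsAmp {d : ℕ} (f : ℝ → ℝ) (m t : ℝ) (a : Q d × Q d × Q d → ℂ) : Prop :=
  ContDiff ℝ (⊤ : ℕ∞) a ∧
    ∀ α β γ : MIdx d, ∃ C : ℝ, ∀ x : Q d × Q d × Q d,
      ‖mderiv3 α β γ a x‖ ≤
        C * f (t * x.1.1 + (1 - t) * x.2.2.1) ^ ((degA α : ℝ) - (degA β : ℝ) + (degA γ : ℝ)) *
          brFA f t x ^ (m - (deg β : ℝ))

/-- The seminorm `|a|_{BS^m_{f,t}, N}`. -/
def ampNorm {d : ℕ} (f : ℝ → ℝ) (m t : ℝ) (N : ℕ) (a : Q d × Q d × Q d → ℂ) : ℝ :=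
  ∑ α ∈ idxSet d N, ∑ β ∈ idxSet d N, ∑ γ ∈ idxSet d N,
    if deg α + deg β + deg γ ≤ N then
      ⨆ x : Q d × Q d × Q d,
        f (t * x.1.1 + (1 - t) * x.2.2.1) ^ (-(degA α : ℝ) + (degA β : ℝ) - (degA γ : ℝ)) *
          brFA f t x ^ (-m + (deg β : ℝ)) * ‖mderiv3 α β γ a x‖
    else 0

/-- The quantization of an amplitude `a(q, p, q')`. -/
def OpAmp {d : ℕ} (ℏ : ℝ) (a : Q d × Q d × Q d → ℂ) (u : Q d → ℂ) : Q d → ℂ :=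
  fun q => ((2 * Real.pi * ℏ) ^ (d + 1) : ℝ)⁻¹ •
    ∫ p : Q d, ∫ q' : Q d, a (q, p, q') * ephase ℏ p (q - q') * u q'


section Helpers

variable {E : Type*} [NormedAddCommGroup E] [NormedSpace ℝ E]

theorem dirD_smooth (v : E) {g : E → ℂ} (hg : ContDiff ℝ (⊤ : ℕ∞) g) :
    ContDiff ℝ (⊤ : ℕ∞) (dirD v g) := by
  unfold dirD
  exact (hg.fderiv_right (m := (⊤ : ℕ∞)) (by simp)).clm_apply contDiff_const

theorem dirD_iter_smooth (v : E) (k : ℕ) {g : E → ℂ} (hg : ContDiff ℝ (⊤ : ℕ∞) g) :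
    ContDiff ℝ (⊤ : ℕ∞) ((dirD v)^[k] g) := by
  induction k generalizing g with
  | zero => simpa using hg
  | succ k ih => rw [Function.iterate_succ_apply]; exact ih (dirD_smooth v hg)

theorem dirD_iter_tsupport (v : E) (k : ℕ) (g : E → ℂ) :
    tsupport ((dirD v)^[k] g) ⊆ tsupport g := by
  induction k generalizing g with
  | zero => simp
  | succ k ih =>
    rw [Function.iterate_succ_apply]
    exact (ih _).trans (tsupport_fderiv_apply_subset ℝ v)

theorem smooth_diff {g : E → ℂ} (hg : ContDiff ℝ (⊤ : ℕ∞) g) : Differentiable ℝ g :=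
  hg.differentiable (by simp)

theorem dirD_iter_add (v : E) (k : ℕ) {g h : E → ℂ} (hg : ContDiff ℝ (⊤ : ℕ∞) g)
    (hh : ContDiff ℝ (⊤ : ℕ∞) h) :
    (dirD v)^[k] (fun x => g x + h x) = fun x => (dirD v)^[k] g x + (dirD v)^[k] h x := by
  induction k generalizing g h with
  | zero => simp
  | succ k ih =>
    simp only [Function.iterate_succ_apply]
    rw [← ih (dirD_smooth v hg) (dirD_smooth v hh)]
    congr 1
    funext x
    simp only [dirD]
    rw [fderiv_fun_add (smooth_diff hg x) (smooth_diff hh x)]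
    rfl

theorem dirD_mul (v : E) {g h : E → ℂ} (hg : ContDiff ℝ (⊤ : ℕ∞) g)
    (hh : ContDiff ℝ (⊤ : ℕ∞) h) :
    dirD v (fun x => g x * h x) = fun x => dirD v g x * h x + g x * dirD v h x := by
  funext x
  simp only [dirD]
  rw [fderiv_fun_mul (smooth_diff hg x) (smooth_diff hh x)]
  simp
  ring

theorem dirD_iter_mul_bound (v : E) (k : ℕ) {g h : E → ℂ} (hg : ContDiff ℝ (⊤ : ℕ∞) g)
    (hh : ContDiff ℝ (⊤ : ℕ∞) h) (x : E) (A B : ℝ)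
    (hA : ∀ i ≤ k, ‖(dirD v)^[i] g x‖ ≤ A) (hB : ∀ i ≤ k, ‖(dirD v)^[i] h x‖ ≤ B) :
    ‖(dirD v)^[k] (fun x => g x * h x) x‖ ≤ 2 ^ k * (A * B) := by
  induction k generalizing g h with
  | zero =>
    have h1 := hA 0 le_rfl
    have h2 := hB 0 le_rfl
    simp only [Function.iterate_zero, id] at *
    rw [norm_mul, pow_zero, one_mul]
    exact mul_le_mul h1 h2 (norm_nonneg _) ((norm_nonneg _).trans h1)
  | succ k ih =>
    rw [Function.iterate_succ_apply, dirD_mul v hg hh,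
      dirD_iter_add v k ((dirD_smooth v hg).mul hh) (hg.mul (dirD_smooth v hh))]
    have h1 := ih (dirD_smooth v hg) hh
      (fun i hi => by rw [← Function.iterate_succ_apply]; exact hA _ (by omega))
      (fun i hi => hB i (by omega))
    have h2 := ih hg (dirD_smooth v hh) (fun i hi => hA i (by omega))
      (fun i hi => by rw [← Function.iterate_succ_apply]; exact hB _ (by omega))
    refine (norm_add_le _ _).trans ?_
    rw [pow_succ]
    linarith

theorem dirD_iter_comp {d : ℕ} (v : Q d) (k : ℕ) (c p : Q d) (s : ℝ) {a : Q d × Q d → ℂ}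
    (ha : ContDiff ℝ (⊤ : ℕ∞) a) (x : Q d) :
    (dirD v)^[k] (fun x => a (c + s • x, p)) x =
      (s : ℂ) ^ k * (dirD ((v, 0) : Q d × Q d))^[k] a (c + s • x, p) := by
  induction k generalizing x with
  | zero => simp
  | succ k ih =>
    rw [Function.iterate_succ_apply', funext ih, Function.iterate_succ_apply']
    set b := (dirD ((v, 0) : Q d × Q d))^[k] a with hb
    have hbs : ContDiff ℝ (⊤ : ℕ∞) b := dirD_iter_smooth _ k ha
    have h1 : HasFDerivAt (fun x : Q d => (c + s • x, p))
        ((s • ContinuousLinearMap.id ℝ (Q d)).prod (0 : Q d →L[ℝ] Q d)) x :=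
      (((hasFDerivAt_id x).const_smul s).const_add c).prodMk (hasFDerivAt_const p x)
    have h2 := ((smooth_diff hbs (c + s • x, p)).hasFDerivAt).comp x h1
    have h3 := h2.const_mul ((s : ℂ) ^ k)
    have h4 : dirD v (fun x => (s : ℂ) ^ k * b (c + s • x, p)) x = _ :=
      congrArg (fun T : Q d →L[ℝ] ℂ => T v) h3.fderiv
    rw [h4]
    have h5 : ((s • v, 0) : Q d × Q d) = s • (v, 0) := by simp
    have h6 : fderiv ℝ b (c + s • x, p) (s • v, 0) =
        (s : ℂ) * fderiv ℝ b (c + s • x, p) (v, 0) := by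
      rw [h5, map_smul, Complex.real_smul]
    have h7 : (((s : ℂ) ^ k • (fderiv ℝ b (c + s • x, p)).comp
        ((s • ContinuousLinearMap.id ℝ (Q d)).prod (0 : Q d →L[ℝ] Q d))) : Q d →L[ℝ] ℂ) v =
        (s : ℂ) ^ k * fderiv ℝ b (c + s • x, p) (s • v, 0) := rfl
    change (((s : ℂ) ^ k • (fderiv ℝ b (c + s • x, p)).comp
        ((s • ContinuousLinearMap.id ℝ (Q d)).prod (0 : Q d →L[ℝ] Q d))) : Q d →L[ℝ] ℂ) v = _
    rw [h7, h6]
    simp only [dirD]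
    ring

end Helpers

/-- the phase -/
def ph {d : ℕ} (ℏ : ℝ) (p x : Q d) : ℂ :=
  Complex.exp (-Complex.I * Complex.ofReal (qdot p x) / Complex.ofReal ℏ)

theorem ph_norm {d : ℕ} (ℏ : ℝ) (p x : Q d) : ‖ph ℏ p x‖ = 1 := by
  unfold ph
  have : -Complex.I * Complex.ofReal (qdot p x) / Complex.ofReal ℏ
      = ((-(qdot p x / ℏ) : ℝ) : ℂ) * Complex.I := by push_cast; ring
  rw [this, Complex.norm_exp_ofReal_mul_I]

/-- `qdot p` as a continuous linear map -/
def qdotL {d : ℕ} (p : Q d) : Q d →L[ℝ] ℝ :=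
  p.1 • ContinuousLinearMap.fst ℝ ℝ (Fin d → ℝ) +
    ∑ i, p.2 i • (ContinuousLinearMap.proj i).comp (ContinuousLinearMap.snd ℝ ℝ (Fin d → ℝ))

theorem qdotL_apply {d : ℕ} (p x : Q d) : qdotL p x = qdot p x := by
  simp [qdotL, qdot]

theorem ph_fderiv {d : ℕ} (ℏ : ℝ) (p x : Q d) :
    DifferentiableAt ℝ (ph ℏ p) x ∧ ∀ v, fderiv ℝ (ph ℏ p) x v =
      (-Complex.I * Complex.ofReal (qdot p v) / Complex.ofReal ℏ) * ph ℏ p x := by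
  have h1 : HasFDerivAt (fun x : Q d => (qdot p x : ℂ)) (Complex.ofRealCLM.comp (qdotL p)) x := by
    have := (Complex.ofRealCLM.comp (qdotL p)).hasFDerivAt (x := x)
    refine this.congr_of_eventuallyEq (Filter.Eventually.of_forall fun y => ?_)
    simp [qdotL_apply]
  have h2 := ((h1.const_mul (-Complex.I)).mul_const ((ℏ : ℂ)⁻¹)).cexp
  have h3 : HasFDerivAt (ph ℏ p) _ x := h2
  refine ⟨h3.differentiableAt, fun v => ?_⟩
  rw [h3.fderiv]
  simp [ph, qdotL_apply, div_eq_mul_inv]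
  ring

theorem ph_cont {d : ℕ} (ℏ : ℝ) (p : Q d) : Continuous (ph ℏ p) :=
  continuous_iff_continuousAt.2 fun x => (ph_fderiv ℏ p x).1.continuousAt

theorem ibp_step {d : ℕ} (ℏ : ℝ) (hℏ : ℏ ∈ Set.Ioc (0 : ℝ) 1) (p v : Q d) (g : Q d → ℂ)
    (hg : ContDiff ℝ (⊤ : ℕ∞) g) (hc : HasCompactSupport g) :
    |qdot p v| * ‖∫ x, g x * ph ℏ p x‖ ≤ ‖∫ x, dirD v g x * ph ℏ p x‖ := by
  have hcont := ph_cont ℏ p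
  have hi : Integrable (fun x => g x * ph ℏ p x) :=
    (hg.continuous.mul hcont).integrable_of_hasCompactSupport hc.mul_right
  have hi' : Integrable (fun x => dirD v g x * ph ℏ p x) :=
    ((dirD_smooth v hg).continuous.mul hcont).integrable_of_hasCompactSupport
      (HasCompactSupport.mul_right (hc.fderiv_apply ℝ v))
  have heq : (fun x => g x * fderiv ℝ (ph ℏ p) x v) = fun x =>
      (-Complex.I * Complex.ofReal (qdot p v) / Complex.ofReal ℏ) * (g x * ph ℏ p x) := by
    funext x; rw [(ph_fderiv ℏ p x).2 v]; ring
  haveI : (volume : Measure (Q d)).IsAddHaarMeasure :=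
    inferInstanceAs (((volume : Measure ℝ).prod (volume : Measure (Fin d → ℝ))).IsAddHaarMeasure)
  have key := integral_mul_fderiv_eq_neg_fderiv_mul_of_integrable (μ := (volume : Measure (Q d)))
    (f := g) (g := ph ℏ p) (v := v) hi' (by rw [heq]; exact hi.const_mul _) hi
    (fun x _ => smooth_diff hg x) (fun x _ => (ph_fderiv ℏ p x).1)
  rw [heq, integral_const_mul] at key
  have h2 := congrArg norm key
  rw [norm_neg, norm_mul] at h2
  have h3 : ‖-Complex.I * Complex.ofReal (qdot p v) / Complex.ofReal ℏ‖ = |qdot p v| / ℏ := by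
    simp [abs_of_pos hℏ.1]
  rw [h3] at h2
  change _ ≤ ‖∫ x, fderiv ℝ g x v * ph ℏ p x‖
  rw [← h2]
  gcongr
  rw [le_div_iff₀ hℏ.1]
  exact mul_le_of_le_one_right (abs_nonneg _) hℏ.2

theorem ibp_iter {d : ℕ} (ℏ : ℝ) (hℏ : ℏ ∈ Set.Ioc (0 : ℝ) 1) (p v : Q d) (k : ℕ) (g : Q d → ℂ)
    (hg : ContDiff ℝ (⊤ : ℕ∞) g) (hc : HasCompactSupport g) :
    |qdot p v| ^ k * ‖∫ x, g x * ph ℏ p x‖ ≤ ‖∫ x, (dirD v)^[k] g x * ph ℏ p x‖ := by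
  induction k generalizing g with
  | zero => simp
  | succ k ih =>
    rw [Function.iterate_succ_apply]
    refine le_trans ?_ (ih _ (dirD_smooth v hg) (hc.fderiv_apply ℝ v))
    rw [pow_succ, mul_assoc]
    gcongr
    exact ibp_step ℏ hℏ p v g hg hc

/-- coordinate directions -/
def cdir {d : ℕ} : Option (Fin d) → Q d
  | none => eR d
  | some i => eTh d i

/-- coordinate multiindices -/
def cidx {d : ℕ} (k : ℕ) : Option (Fin d) → MIdx d
  | none => (k, 0)
  | some i => (0, Pi.single i k)

theorem foldr_zero {d : ℕ} {X : Type*} (F : Fin d → X → X) (l : List (Fin d)) (g : X) :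
    l.foldr (fun i h => (F i)^[(0 : Fin d → ℕ) i] h) g = g := by
  induction l with
  | nil => rfl
  | cons a l ih => simp

theorem foldr_single_not {d : ℕ} {X : Type*} (F : Fin d → X → X) (l : List (Fin d)) (g : X)
    (i : Fin d) (k : ℕ) (hi : i ∉ l) :
    l.foldr (fun j h => (F j)^[(Pi.single i k : Fin d → ℕ) j] h) g = g := by
  induction l with
  | nil => rfl
  | cons a l ih =>
    simp only [List.mem_cons, not_or] at hi
    rw [List.foldr_cons, ih hi.2, Pi.single_eq_of_ne (Ne.symm hi.1)]
    rfl

theorem foldr_single {d : ℕ} {X : Type*} (F : Fin d → X → X) (l : List (Fin d)) (g : X)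
    (i : Fin d) (k : ℕ) (hi : i ∈ l) (hl : l.Nodup) :
    l.foldr (fun j h => (F j)^[(Pi.single i k : Fin d → ℕ) j] h) g = (F i)^[k] g := by
  induction l with
  | nil => simp at hi
  | cons a l ih =>
    rw [List.nodup_cons] at hl
    rw [List.foldr_cons]
    by_cases h : i = a
    · subst h
      rw [foldr_single_not F l g i k hl.1, Pi.single_eq_same]
    · rw [ih (by simpa [h] using hi) hl.2, Pi.single_eq_of_ne (Ne.symm h)]
      rfl

theorem mderiv1_cidx {d : ℕ} (o : Option (Fin d)) (k : ℕ) (u : Q d → ℂ) :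
    mderiv1 (cidx k o) u = (dirD (cdir o))^[k] u := by
  cases o with
  | none => simp only [mderiv1, cidx, cdir]; rw [foldr_zero (fun i => dirD (eTh d i))]
  | some i =>
    simp only [mderiv1, cidx, cdir]
    rw [foldr_single (fun i => dirD (eTh d i)) _ _ _ _ (List.mem_finRange i) (List.nodup_finRange d)]
    rfl

theorem mderiv2_cidx {d : ℕ} (o : Option (Fin d)) (k : ℕ) (a : Q d × Q d → ℂ) :
    mderiv2 (cidx k o) (0, 0) a = (dirD ((cdir o, 0) : Q d × Q d))^[k] a := by
  simp only [mderiv2]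
  rw [foldr_zero (fun i => dirD (((0 : Q d), eTh d i) : Q d × Q d))]
  cases o with
  | none =>
    simp only [cidx, cdir]; rw [foldr_zero (fun i => dirD ((eTh d i, 0) : Q d × Q d))]
    rfl
  | some i =>
    simp only [cidx, cdir]
    rw [foldr_single (fun i => dirD ((eTh d i, 0) : Q d × Q d)) _ _ _ _ (List.mem_finRange i)
      (List.nodup_finRange d)]
    rfl

theorem deg_cidx {d : ℕ} (o : Option (Fin d)) (k : ℕ) : deg (cidx k o) = k := by
  cases o <;> simp [deg, cidx]

theorem cidx_mem {d : ℕ} (o : Option (Fin d)) (k N : ℕ) (h : k ≤ N) : cidx k o ∈ idxSet d N := by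
  simp only [idxSet, Finset.mem_filter, deg_cidx, h, and_true, Finset.mem_product,
    Fintype.mem_piFinset, Finset.mem_range]
  have hd := deg_cidx o k
  unfold deg at hd
  refine ⟨by omega, fun i => ?_⟩
  have := Finset.single_le_sum (f := (cidx k o).2) (fun _ _ => Nat.zero_le _) (Finset.mem_univ i)
  omega

theorem ck_bound {d : ℕ} (o : Option (Fin d)) (k N : ℕ) (h : k ≤ N) (u : Q d → ℂ)
    (hu : IsCc u) (x : Q d) : ‖(dirD (cdir o))^[k] u x‖ ≤ ckNorm N u := by
  have hc : HasCompactSupport ((dirD (cdir o))^[k] u) :=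
    hu.2.of_isClosed_subset (isClosed_tsupport _) (dirD_iter_tsupport _ _ _)
  obtain ⟨C, hC⟩ := hc.exists_bound_of_continuous (dirD_iter_smooth _ k hu.1).continuous
  have h1 : ‖(dirD (cdir o))^[k] u x‖ ≤ ⨆ q, ‖mderiv1 (cidx k o) u q‖ := by
    rw [mderiv1_cidx]
    exact le_ciSup (f := fun q => ‖(dirD (cdir o))^[k] u q‖) ⟨C, by rintro _ ⟨y, rfl⟩; exact hC y⟩ x
  refine h1.trans ?_
  exact Finset.single_le_sum (f := fun β => ⨆ q : Q d, ‖mderiv1 β u q‖)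
    (fun β _ => Real.iSup_nonneg fun q => norm_nonneg _) (cidx_mem o k N h)

theorem ckNorm_nonneg {d : ℕ} (N : ℕ) (u : Q d → ℂ) : 0 ≤ ckNorm N u :=
  Finset.sum_nonneg fun β _ => Real.iSup_nonneg fun q => norm_nonneg _

theorem one_le_brP {d : ℕ} (p : Q d) : 1 ≤ brP p := by
  unfold brP
  rw [Real.one_le_sqrt]
  have : 0 ≤ ∑ i, (p.2 i) ^ 2 := Finset.sum_nonneg fun _ _ => sq_nonneg _
  nlinarith [sq_nonneg p.1]

theorem brF_bounds {d : ℕ} (f : ℝ → ℝ) (hf : ∀ r, 1 ≤ f r) (x : Q d × Q d) :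
    1 ≤ brF f x ∧ brF f x ≤ brP x.2 := by
  unfold brF brP
  constructor
  · rw [Real.one_le_sqrt]
    have : 0 ≤ ∑ i, (x.2.2 i / f x.1.1) ^ 2 := Finset.sum_nonneg fun _ _ => sq_nonneg _
    nlinarith [sq_nonneg x.2.1]
  · apply Real.sqrt_le_sqrt
    refine add_le_add le_rfl (Finset.sum_le_sum fun i _ => ?_)
    rw [div_pow]
    apply div_le_self (sq_nonneg _)
    exact one_le_pow₀ (hf _)

theorem brF_rpow {d : ℕ} (f : ℝ → ℝ) (hf : ∀ r, 1 ≤ f r) (x : Q d × Q d) (m : ℝ) :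
    brF f x ^ m ≤ brP x.2 ^ |m| := by
  obtain ⟨h1, h2⟩ := brF_bounds f hf x
  calc brF f x ^ m ≤ brF f x ^ |m| := Real.rpow_le_rpow_of_exponent_le h1 (le_abs_self m)
    _ ≤ _ := Real.rpow_le_rpow (by linarith) h2 (abs_nonneg m)

theorem brP_pow {d : ℕ} (p : Q d) (j : ℕ) :
    brP p ^ (2 * (j + 1)) ≤ ((d : ℝ) + 2) ^ j *
      (1 + ∑ o : Option (Fin d), |qdot p (cdir o)| ^ (2 * (j + 1))) := by
  have h := pow_sum_div_card_le_sum_pow (s := (Finset.univ : Finset (Option (Option (Fin d)))))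
    (f := fun o => o.elim (1 : ℝ) (fun o => qdot p (cdir o) ^ 2))
    (by rintro (_ | o) _ <;> simp [sq_nonneg]) j
  have h0 : ∀ i, qdot p (eTh d i) = p.2 i := by intro i; simp [qdot, eTh, Pi.single_apply]
  have h0' : qdot p (eR d) = p.1 := by simp [qdot, eR]
  have hs : brP p ^ 2 = 1 + ∑ o : Option (Fin d), qdot p (cdir o) ^ 2 := by
    unfold brP
    rw [Real.sq_sqrt (by positivity)]
    simp [Fintype.sum_option, cdir, h0, h0']
    ring
  have hcard : ((Finset.univ : Finset (Option (Option (Fin d)))).card : ℝ) = d + 2 := by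
    simp; ring
  rw [hcard, div_le_iff₀' (by positivity)] at h
  rw [Fintype.sum_option, Fintype.sum_option (α := Option (Fin d)) (fun o => _ ^ (j + 1))] at h
  simp only [Option.elim] at h
  rw [← hs] at h
  simp only [pow_mul, sq_abs]
  simpa using h

theorem symb_bound {d : ℕ} (f : ℝ → ℝ) (hf : GoodF f) (m t : ℝ)
    (ht : t ∈ Set.Icc (0 : ℝ) 1)
    (a : Q d × Q d → ℂ) (ha : IsSymbol f m a)
    (K L : Set (Q d)) (hK : IsCompact K) (hL : IsCompact L) (N' : ℕ) :
    ∃ A ≥ (0 : ℝ), ∀ o : Option (Fin d), ∀ k ≤ N', ∀ q ∈ K, ∀ x ∈ L, ∀ p : Q d,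
      ‖(dirD (cdir o))^[k] (fun x => a (t • q + (1 - t) • x, p)) x‖ ≤ A * brP p ^ |m| := by
  choose C hC using ha.2
  have hcont : Continuous fun z : Q d × Q d => f (t • z.1 + (1 - t) • z.2).1 :=
    hf.1.continuous.comp (by fun_prop)
  obtain ⟨F, hF⟩ := (hK.prod hL).exists_bound_of_continuousOn hcont.continuousOn
  refine ⟨∑ o : Option (Fin d), ∑ k ∈ Finset.range (N' + 1),
    |C (cidx k o) (0, 0)| * |F| ^ degA (cidx k o), by positivity, ?_⟩
  intro o k hk q hq x hx p
  have hterm : |C (cidx k o) (0, 0)| * |F| ^ degA (cidx k o) ≤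
      ∑ o : Option (Fin d), ∑ k ∈ Finset.range (N' + 1),
        |C (cidx k o) (0, 0)| * |F| ^ degA (cidx k o) := by
    refine le_trans ?_ (Finset.single_le_sum (f := fun o : Option (Fin d) =>
      ∑ k ∈ Finset.range (N' + 1), |C (cidx k o) (0, 0)| * |F| ^ degA (cidx k o))
      (fun _ _ => by positivity) (Finset.mem_univ o))
    exact Finset.single_le_sum (f := fun k => |C (cidx k o) (0, 0)| * |F| ^ degA (cidx k o))
      (fun _ _ => by positivity) (Finset.mem_range.2 (by omega))
  have hbp : 0 ≤ brP p ^ |m| := Real.rpow_nonneg (by linarith [one_le_brP p]) _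
  refine le_trans ?_ (mul_le_mul_of_nonneg_right hterm hbp)
  rw [dirD_iter_comp _ _ _ _ _ ha.1, norm_mul, ← mderiv2_cidx]
  have hs : ‖((1 - t : ℝ) : ℂ) ^ k‖ ≤ 1 := by
    rw [norm_pow]
    refine pow_le_one₀ (norm_nonneg _) ?_
    rw [Complex.norm_real, Real.norm_eq_abs, abs_le]
    constructor <;> linarith [ht.1, ht.2]
  refine (mul_le_of_le_one_left (norm_nonneg _) hs).trans ?_
  have h1 := hC (cidx k o) (0, 0) (t • q + (1 - t) • x, p)
  have h2 := hF (q, x) ⟨hq, hx⟩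
  set y := t • q + (1 - t) • x with hy
  have hd1 : degA ((0, 0) : MIdx d) = 0 := by simp [degA]
  have hd2 : deg ((0, 0) : MIdx d) = 0 := by simp [deg]
  rw [hd1, hd2] at h1
  simp only [Nat.cast_zero, sub_zero, Real.rpow_natCast] at h1
  refine h1.trans ?_
  have hf1 : 1 ≤ f y.1 := hf.2.1 _
  have hfF : f y.1 ≤ |F| := (le_abs_self _).trans (h2.trans (le_abs_self F))
  have hb := brF_rpow f hf.2.1 (y, p) m
  have hb0 : 0 ≤ brF f (y, p) ^ m :=
    Real.rpow_nonneg (by linarith [(brF_bounds f hf.2.1 (y, p)).1]) _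
  have hf0 : 0 ≤ f y.1 := by linarith
  gcongr
  exact le_abs_self _

theorem main_bound {d : ℕ} (f : ℝ → ℝ) (hf : GoodF f) (m t ℏ : ℝ)
    (ht : t ∈ Set.Icc (0 : ℝ) 1) (hℏ : ℏ ∈ Set.Ioc (0 : ℝ) 1)
    (a : Q d × Q d → ℂ) (ha : IsSymbol f m a)
    (K L : Set (Q d)) (hK : IsCompact K) (hL : IsCompact L) (N' : ℕ) :
    ∃ A ≥ (0 : ℝ), ∀ o : Option (Fin d), ∀ k ≤ N', ∀ q ∈ K, ∀ p : Q d, ∀ u : Q d → ℂ,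
      IsCc u → tsupport u ⊆ L →
      |qdot p (cdir o)| ^ k * ‖∫ x, (a (t • q + (1 - t) • x, p) * u x) * ph ℏ p x‖
        ≤ A * brP p ^ |m| * ckNorm N' u := by
  obtain ⟨A, hA0, hA⟩ := symb_bound f hf m t ht a ha K L hK hL N'
  refine ⟨2 ^ N' * A * volume.real L, by positivity, ?_⟩
  intro o k hk q hq p u hu hsu
  have hb : ContDiff ℝ (⊤ : ℕ∞) (fun x : Q d => a (t • q + (1 - t) • x, p)) :=
    ha.1.comp (by fun_prop)
  have hg := hb.mul hu.1
  have hts : tsupport (fun x => a (t • q + (1 - t) • x, p) * u x) ⊆ tsupport u :=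
    tsupport_mul_subset_right
  have hc : HasCompactSupport (fun x => a (t • q + (1 - t) • x, p) * u x) :=
    hu.2.of_isClosed_subset (isClosed_tsupport _) hts
  refine (ibp_iter ℏ hℏ p (cdir o) k _ hg hc).trans ?_
  have hz : ∀ x, x ∉ L → (dirD (cdir o))^[k] (fun x => a (t • q + (1 - t) • x, p) * u x) x
      * ph ℏ p x = 0 := by
    intro x hx
    rw [image_eq_zero_of_notMem_tsupport (f := (dirD (cdir o))^[k] _), zero_mul]
    exact fun h => hx (hsu (hts (dirD_iter_tsupport _ _ _ h)))
  rw [← setIntegral_eq_integral_of_forall_compl_eq_zero hz]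
  have hbp : 0 ≤ brP p ^ |m| := Real.rpow_nonneg (by linarith [one_le_brP p]) _
  have hck := ckNorm_nonneg N' u
  refine (norm_setIntegral_le_of_norm_le_const
    (C := 2 ^ N' * ((A * brP p ^ |m|) * ckNorm N' u)) hL.measure_lt_top ?_).trans (le_of_eq (by ring))
  intro x hx
  rw [norm_mul, ph_norm, mul_one]
  refine (dirD_iter_mul_bound (cdir o) k hb hu.1 x (A * brP p ^ |m|) (ckNorm N' u)
    (fun i hi => hA o i (hi.trans hk) q hq x hx p)
    (fun i hi => ck_bound o i N' (hi.trans hk) u hu x)).trans ?_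
  gcongr
  norm_num

/-- rapid decay in `p` of the inner integral, locally uniformly in `q`. -/
theorem statement1 (d : ℕ) (f : ℝ → ℝ) (hf : GoodF f) (m t ℏ : ℝ)
    (ht : t ∈ Set.Icc (0 : ℝ) 1) (hℏ : ℏ ∈ Set.Ioc (0 : ℝ) 1)
    (a : Q d × Q d → ℂ) (ha : IsSymbol f m a)
    (K L : Set (Q d)) (hK : IsCompact K) (hL : IsCompact L) (N : ℕ) :
    ∃ C > (0 : ℝ), ∃ N' : ℕ, ∀ q ∈ K, ∀ p : Q d, ∀ u : Q d → ℂ,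
      IsCc u → tsupport u ⊆ L →
        ‖∫ q' : Q d, a (t • q + (1 - t) • q', p) *
            Complex.exp (-Complex.I * Complex.ofReal (qdot p q') / Complex.ofReal ℏ) * u q'‖
          ≤ C * brP p ^ (-(N : ℝ)) * ckNorm N' u := by
  set J : ℕ := N + ⌈|m|⌉₊ with hJ
  obtain ⟨A, hA0, hA⟩ := main_bound f hf m t ℏ ht hℏ a ha K L hK hL (2 * (J + 1))
  set B : ℝ := ((d : ℝ) + 2) ^ J * (A + ∑ _o : Option (Fin d), A) with hB
  have hB0 : 0 ≤ B := by positivity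
  refine ⟨B + 1, by positivity, 2 * (J + 1), ?_⟩
  intro q hq p u hu hsu
  have hre : (fun q' : Q d => a (t • q + (1 - t) • q', p) *
      Complex.exp (-Complex.I * Complex.ofReal (qdot p q') / Complex.ofReal ℏ) * u q') =
      fun x => (a (t • q + (1 - t) • x, p) * u x) * ph ℏ p x := by
    funext x; simp only [ph]; ring
  rw [hre]
  set I : ℝ := ‖∫ x, (a (t • q + (1 - t) • x, p) * u x) * ph ℏ p x‖ with hI
  have hI0 : 0 ≤ I := norm_nonneg _
  set W := brP p ^ |m| * ckNorm (2 * (J + 1)) u with hW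
  have hb1 := one_le_brP p
  have hb0 : 0 < brP p := by linarith
  have hck := ckNorm_nonneg (2 * (J + 1)) u
  have e0 : I ≤ A * W := by
    have := hA none 0 (by omega) q hq p u hu hsu
    rw [pow_zero, one_mul, mul_assoc] at this
    exact this
  have e1 : ∀ o, |qdot p (cdir o)| ^ (2 * (J + 1)) * I ≤ A * W := by
    intro o
    have := hA o (2 * (J + 1)) le_rfl q hq p u hu hsu
    rw [mul_assoc] at this
    exact this
  have e2 : brP p ^ (2 * (J + 1)) * I ≤ B * W := by
    calc brP p ^ (2 * (J + 1)) * I ≤ (((d : ℝ) + 2) ^ J *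
          (1 + ∑ o : Option (Fin d), |qdot p (cdir o)| ^ (2 * (J + 1)))) * I := by
          gcongr; exact brP_pow p J
      _ = ((d : ℝ) + 2) ^ J *
          (I + ∑ o : Option (Fin d), |qdot p (cdir o)| ^ (2 * (J + 1)) * I) := by
          rw [← Finset.sum_mul]; ring
      _ ≤ ((d : ℝ) + 2) ^ J * (A * W + ∑ _o : Option (Fin d), A * W) := by
          exact mul_le_mul_of_nonneg_left
            (add_le_add e0 (Finset.sum_le_sum fun o _ => e1 o)) (by positivity)
      _ = B * W := by rw [hB, ← Finset.sum_mul]; ring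
  have e3 : brP p ^ |m| ≤ brP p ^ (-(N : ℝ)) * brP p ^ (2 * (J + 1)) := by
    rw [← Real.rpow_natCast, ← Real.rpow_add hb0]
    apply Real.rpow_le_rpow_of_exponent_le hb1
    have := Nat.le_ceil |m|
    rw [hJ]; push_cast
    have hn : (0 : ℝ) ≤ N := Nat.cast_nonneg N
    have := abs_nonneg m
    linarith
  have hpos : 0 < brP p ^ (2 * (J + 1)) := by positivity
  have e4 : brP p ^ (2 * (J + 1)) * I ≤ brP p ^ (2 * (J + 1)) *
      ((B + 1) * brP p ^ (-(N : ℝ)) * ckNorm (2 * (J + 1)) u) := by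
    refine e2.trans ?_
    calc B * W ≤ (B + 1) * ((brP p ^ (-(N : ℝ)) * brP p ^ (2 * (J + 1))) *
          ckNorm (2 * (J + 1)) u) := by
          rw [hW]; gcongr; linarith
      _ = _ := by ring
  exact le_of_mul_le_mul_left e4 hpos

end
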